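/- arXiv:2211.07206 — 4 statements merged into one kernel-verified Lean document; each statement's English description precedes it below -/
import Mathlib

section
/- Improvement of the PACOH meta-learning bound over the per-task learning bound: Set λ = √n and β = √m, write Z(S,P) = Z_{√m}(S,P), and let Zᴵᴵ = E_{P∼P}[ exp( (1/(√(nm)+1))·∑_{i=1}^n log Z(S_i,P) ) ], assumed finite and positive, with all expectations E_{P∼P}[log Z(S_i,P)] finite. Define the per-task bound value B_pt = −(1/(n√m))·∑_{i=1}^n E_{P∼P}[log Z(S_i,P)] + C and the PACOH bound value B_meta = −(1/√n + 1/(n√m))·log Zᴵᴵ + C, where C is the common constant term of the two bounds. Then the improvement Δ := B_pt − B_meta satisfies Δ = (1/√n + 1/(n√m))·log E_{P∼P}[ exp( (1/(√(nm)+1))·∑_{i=1}^n ( log Z(S_i,P) − E_{P′∼P}[log Z(S_i,P′)] ) ) ], and Δ ≥ 0. -/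
open MeasureTheory Real
open scoped ENNReal Classical

noncomputable section

/-- The Kullback–Leibler divergence `D_KL(ρ‖ν)`: equal to `E_{x∼ρ}[log (dρ/dν)(x)]` when
`ρ ≪ ν` (and this expectation is defined), and `+∞` otherwise. -/
def KLdiv {α : Type*} [MeasurableSpace α] (ρ ν : Measure α) : ℝ≥0∞ :=
  if ρ ≪ ν ∧ Integrable (llr ρ ν) ρ then ENNReal.ofReal (∫ x, llr ρ ν x ∂ρ) else ∞

variable {Z H : Type*} [MeasurableSpace Z] [MeasurableSpace H]

/-- Expected error `L(h, D) = E_{z∼D}[l(h,z)]`. -/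
def expErr (l : H → Z → ℝ) (D : Measure Z) (h : H) : ℝ := ∫ z, l h z ∂D

/-- Empirical error `L̂(h, S) = (1/m) ∑_j l(h, z_j)` on a dataset `S ∈ Z^m`. -/
def empErr (l : H → Z → ℝ) {m : ℕ} (S : Fin m → Z) (h : H) : ℝ :=
  (∑ j, l h (S j)) / m

/-- Gibbs expected error `L(Q, D) = E_{h∼Q}[L(h, D)]` of a randomized predictor `Q`. -/
def gibbsExpErr (l : H → Z → ℝ) (Q : Measure H) (D : Measure Z) : ℝ :=
  ∫ h, expErr l D h ∂Q

/-- Gibbs empirical error `L̂(Q, S) = E_{h∼Q}[L̂(h, S)]` of a randomized predictor `Q`. -/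
def gibbsEmpErr (l : H → Z → ℝ) {m : ℕ} (Q : Measure H) (S : Fin m → Z) : ℝ :=
  ∫ h, empErr l S h ∂Q

/-- The distribution `D^m` of `m` i.i.d. samples from `D`. -/
def iidSamples (m : ℕ) (D : Measure Z) : Measure (Fin m → Z) := Measure.pi fun _ => D

/-- The hierarchical task distribution `T_h` on pairs `(D, S)`: draw `D ∼ T`, then
`S ∼ D^m`. -/
def taskDistr (m : ℕ) (T : Measure (Measure Z)) : Measure (Measure Z × (Fin m → Z)) :=
  T.bind fun D => (iidSamples m D).map fun S => (D, S)

/-- `E_{(D,S)∼T_h}[L(Q(S,P), D)]`: the expected generalization error on tasks from the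
environment `T` of the base learner `QL` instantiated with the prior `P`. -/
def priorTransferErr (l : H → Z → ℝ) (m : ℕ) (T : Measure (Measure Z))
    (QL : (Fin m → Z) → Measure H → Measure H) (P : Measure H) : ℝ :=
  ∫ D, ∫ S, gibbsExpErr l (QL S P) D ∂(iidSamples m D) ∂T

/-- The transfer error `L(Q, T) = E_{P∼Q} E_{(D,S)∼T_h}[L(Q(S,P), D)]` of a
hyper-posterior `Q`. -/
def transferErr (l : H → Z → ℝ) (m : ℕ) (T : Measure (Measure Z))
    (QL : (Fin m → Z) → Measure H → Measure H) (Q : Measure (Measure H)) : ℝ :=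
  ∫ P, priorTransferErr l m T QL P ∂Q

/-- The empirical multi-task error
`L̂(Q, S_1, …, S_n) = E_{P∼Q}[(1/n) ∑_i L̂(Q(S_i,P), S_i)]`. -/
def empMultiErr (l : H → Z → ℝ) {m : ℕ}
    (QL : (Fin m → Z) → Measure H → Measure H) (Q : Measure (Measure H))
    {n : ℕ} (S : Fin n → Fin m → Z) : ℝ :=
  ∫ P, (1 / n : ℝ) * ∑ i, gibbsEmpErr l (QL (S i) P) (S i) ∂Q

/-- The environment-level cumulant generating function term `Ψ^{II}(λ)`. -/
def PsiII (l : H → Z → ℝ) (m n : ℕ) (T : Measure (Measure Z))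
    (QL : (Fin m → Z) → Measure H → Measure H) (Pr : Measure (Measure H)) (lam : ℝ) : ℝ :=
  ((n : ℝ) / lam) * Real.log (∫ P, ∫ D, ∫ S,
      Real.exp ((lam / n) * (priorTransferErr l m T QL P - gibbsExpErr l (QL S P) D))
    ∂(iidSamples m D) ∂T ∂Pr)

end

noncomputable section
variable {Z H : Type*} [MeasurableSpace Z] [MeasurableSpace H]

/-- The generalized marginal likelihood (partition function)
`Z_β(S, P) = E_{h∼P}[exp (-β L̂(h,S))]`. -/
def Zpart (l : H → Z → ℝ) (β : ℝ) {m : ℕ} (S : Fin m → Z) (P : Measure H) : ℝ :=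
  ∫ h, Real.exp (-β * empErr l S h) ∂P

/-- The Gibbs posterior base learner: `Q*(S, P)` has density `exp (-β L̂(·,S)) / Z_β(S,P)`
with respect to the prior `P`. -/
def gibbsPosterior (l : H → Z → ℝ) (β : ℝ) {m : ℕ}
    (S : Fin m → Z) (P : Measure H) : Measure H :=
  P.withDensity fun h => ENNReal.ofReal (Real.exp (-β * empErr l S h) / Zpart l β S P)

end

/-- Jensen's inequality for the exponential, in logarithmic form. -/
theorem integral_le_log_integral_exp {α : Type*} [MeasurableSpace α] {μ : Measure α}
    [IsProbabilityMeasure μ] {f : α → ℝ} (hf : Integrable f μ)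
    (hexp : Integrable (fun x => Real.exp (f x)) μ) :
    ∫ x, f x ∂μ ≤ Real.log (∫ x, Real.exp (f x) ∂μ) := by
  have hjensen : Real.exp (∫ x, f x ∂μ) ≤ ∫ x, Real.exp (f x) ∂μ :=
    convexOn_exp.map_integral_le Real.continuous_exp.continuousOn isClosed_univ
      (.of_forall fun _ => Set.mem_univ _) hf hexp
  exact (Real.le_log_iff_exp_le ((Real.exp_pos _).trans_le hjensen)).2 hjensen

/-- Shifting the exponent by a constant shifts the log-partition function by that constant. -/
theorem log_integral_exp_sub_const {α : Type*} [MeasurableSpace α] {μ : Measure α}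
    {f : α → ℝ} (a : ℝ) (hpos : 0 < ∫ x, Real.exp (f x) ∂μ) :
    Real.log (∫ x, Real.exp (f x - a) ∂μ) = Real.log (∫ x, Real.exp (f x) ∂μ) - a := by
  simp only [Real.exp_sub]
  rw [integral_div, Real.log_div hpos.ne' (Real.exp_ne_zero a), Real.log_exp]

/-- The prefactor of the meta-learning bound times the exponent `1 / (√(nm) + 1)` is the
prefactor of the per-task bound. -/
theorem meta_prefactor_mul_exponent {x y : ℝ} (hx : 0 < x) (hy : 0 < y) :
    (1 / √x + 1 / (x * √y)) * (1 / (√(x * y) + 1)) = 1 / (x * √y) := by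
  have hx' : 0 < √x := Real.sqrt_pos.2 hx
  have hy' : 0 < √y := Real.sqrt_pos.2 hy
  have hsq : x = √x * √x := (Real.mul_self_sqrt hx.le).symm
  rw [Real.sqrt_mul hx.le]
  generalize √x = a at *
  subst hsq
  field_simp

/-- **Improvement of the PACOH meta-learning bound over the per-task learning bound
(Proposition 7).** With `λ = √n`, `β = √m` and `Z(S,P) = Z_{√m}(S,P)`, the difference
`Δ = B_pt - B_meta` between the per-task bound value and the PACOH bound value equals
`(1/√n + 1/(n√m)) log E_{P∼P}[exp ((1/(√(nm)+1)) ∑_i (log Z(S_i,P) - E_{P'∼P}[log Z(S_i,P')]))]`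
and is nonnegative. -/
theorem meta_learning_improvement_over_per_task
    {Z H : Type*} [MeasurableSpace Z] [MeasurableSpace H]
    (l : H → Z → ℝ) (hl : Measurable (Function.uncurry l))
    (m n : ℕ) (hm : 0 < m) (hn : 0 < n)
    (S : Fin n → Fin m → Z)
    (Pr : Measure (Measure H)) [IsProbabilityMeasure Pr]
    -- `Z^{II}` is finite and positive:
    (hZIIint : Integrable (fun P : Measure H => Real.exp ((1 / (Real.sqrt ((n : ℝ) * m) + 1)) *
        ∑ i, Real.log (Zpart l (Real.sqrt m) (S i) P))) Pr)
    (hZIIpos : 0 < ∫ P, Real.exp ((1 / (Real.sqrt ((n : ℝ) * m) + 1)) *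
        ∑ i, Real.log (Zpart l (Real.sqrt m) (S i) P)) ∂Pr)
    -- all the expectations `E_{P∼P}[log Z(S_i,P)]` are finite:
    (hlogZ : ∀ i, Integrable (fun P => Real.log (Zpart l (Real.sqrt m) (S i) P)) Pr)
    -- the common constant term of the two bounds:
    (C : ℝ)
    -- the per-task bound value:
    (Bpt : ℝ)
    (hBpt : Bpt = -(1 / ((n : ℝ) * Real.sqrt m))
        * ∑ i, ∫ P, Real.log (Zpart l (Real.sqrt m) (S i) P) ∂Pr + C)
    -- the PACOH meta-learning bound value:
    (Bmeta : ℝ)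
    (hBmeta : Bmeta = -(1 / Real.sqrt n + 1 / ((n : ℝ) * Real.sqrt m))
        * Real.log (∫ P, Real.exp ((1 / (Real.sqrt ((n : ℝ) * m) + 1)) *
            ∑ i, Real.log (Zpart l (Real.sqrt m) (S i) P)) ∂Pr) + C) :
    Bpt - Bmeta
      = (1 / Real.sqrt n + 1 / ((n : ℝ) * Real.sqrt m))
          * Real.log (∫ P, Real.exp ((1 / (Real.sqrt ((n : ℝ) * m) + 1)) *
              ∑ i, (Real.log (Zpart l (Real.sqrt m) (S i) P)
                - ∫ P', Real.log (Zpart l (Real.sqrt m) (S i) P') ∂Pr)) ∂Pr)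
    ∧ 0 ≤ Bpt - Bmeta := by
  set c : ℝ := 1 / (Real.sqrt ((n : ℝ) * m) + 1)
  set K : ℝ := 1 / Real.sqrt n + 1 / ((n : ℝ) * Real.sqrt m)
  have hK : 0 ≤ K := by positivity
  have hKc : K * c = 1 / ((n : ℝ) * Real.sqrt m) :=
    meta_prefactor_mul_exponent (by exact_mod_cast hn) (by exact_mod_cast hm)
  set A : ℝ := ∑ i, ∫ P, Real.log (Zpart l (Real.sqrt m) (S i) P) ∂Pr with hA
  have hsum : Integrable (fun P => c * ∑ i, Real.log (Zpart l (Real.sqrt m) (S i) P)) Pr :=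
    (integrable_finsetSum _ fun i _ => hlogZ i).const_mul c
  have hmean : ∫ P, c * ∑ i, Real.log (Zpart l (Real.sqrt m) (S i) P) ∂Pr = c * A := by
    rw [integral_const_mul, integral_finsetSum _ fun i _ => hlogZ i]
  have hjensen := integral_le_log_integral_exp hsum hZIIint
  rw [hmean] at hjensen
  have hgap : Bpt - Bmeta = K * (Real.log (∫ P, Real.exp (c *
      ∑ i, Real.log (Zpart l (Real.sqrt m) (S i) P)) ∂Pr) - c * A) := by
    rw [hBpt, hBmeta, ← hKc]
    ring
  refine ⟨?_, hgap ▸ mul_nonneg hK (sub_nonneg.2 hjensen)⟩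
  simp only [Finset.sum_sub_distrib, ← hA, mul_sub]
  rw [log_integral_exp_sub_const _ hZIIpos, hgap, mul_sub]
end

section
/- Environment-level generalization step of the meta-learning bound: Let T be an environment, Q : Z^m × M(H) → M(H) a base learner, P a hyper-prior on M(H), λ > 0, and fix tasks (D_1,S_1),…,(D_n,S_n). Then for every hyper-posterior Q ∈ M(M(H)) for which the appearing expectations exist and are finite: L(Q,T) ≤ E_{P∼Q}[(1/n)·∑_{i=1}^n L(Q(S_i,P),D_i)] + (1/λ)·D_KL(Q‖P) + (1/λ)·log E_{P∼P}[ e^{(λ/n)·∑_{i=1}^n ( E_{(D,S)∼T_h}[L(Q(S,P),D)] − L(Q(S_i,P),D_i) )} ]. -/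
open MeasureTheory Real
open scoped ENNReal Classical

/-- The Donsker–Varadhan inequality: `E_μ[f] ≤ D_KL(μ‖ν) + log E_ν[exp f]`. -/
theorem integral_le_integral_llr_add_log_integral_exp {α : Type*} [MeasurableSpace α]
    {μ ν : Measure α} [IsProbabilityMeasure μ] [IsProbabilityMeasure ν] {f : α → ℝ}
    (hμν : μ ≪ ν) (h_int : Integrable (llr μ ν) μ) (hfμ : Integrable f μ)
    (hfν : Integrable (fun x => Real.exp (f x)) ν) :
    ∫ x, f x ∂μ ≤ ∫ x, llr μ ν x ∂μ + Real.log (∫ x, Real.exp (f x) ∂ν) := by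
  have := isProbabilityMeasure_tilted hfν
  have h := InformationTheory.integral_llr_add_sub_measure_univ_nonneg
    (hμν.trans (absolutelyContinuous_tilted hfν))
    (integrable_llr_tilted_right hμν hfμ h_int hfν)
  rw [integral_llr_tilted_right hμν hfμ hfν h_int] at h
  simp only [probReal_univ] at h
  linarith

/-- **Environment-level generalization step of the meta-learning bound.** For an environment
`T`, base learner `QL`, hyper-prior `P`, `λ > 0` and fixed tasks `(D_1,S_1),…,(D_n,S_n)`,
every hyper-posterior `Q` for which the appearing expectations exist and are finite satisfies
`L(Q,T) ≤ E_{P∼Q}[(1/n) ∑_i L(Q(S_i,P),D_i)] + (1/λ) D_KL(Q‖P)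
  + (1/λ) log E_{P∼P}[exp ((λ/n) ∑_i (E_{(D,S)∼T_h}[L(Q(S,P),D)] - L(Q(S_i,P),D_i)))]`. -/
theorem environment_level_generalization_step
    {Z H : Type*} [MeasurableSpace Z] [MeasurableSpace H]
    (l : H → Z → ℝ) (hl : Measurable (Function.uncurry l))
    (m n : ℕ) (hm : 0 < m) (hn : 0 < n)
    (T : Measure (Measure Z)) [IsProbabilityMeasure T]
    (D : Fin n → Measure Z) (hD : ∀ i, IsProbabilityMeasure (D i))
    (S : Fin n → Fin m → Z)
    (QL : (Fin m → Z) → Measure H → Measure H)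
    (hQL : Measurable (Function.uncurry QL))
    (hQLprob : ∀ S' P, IsProbabilityMeasure (QL S' P))
    (Pr : Measure (Measure H)) [IsProbabilityMeasure Pr]
    (lam : ℝ) (hlam : 0 < lam)
    -- the CGF-type expectation on the right-hand side exists and is finite:
    (hmgf : Integrable (fun P : Measure H => Real.exp ((lam / n) *
        ∑ i, (priorTransferErr l m T QL P - gibbsExpErr l (QL (S i) P) (D i)))) Pr) :
    ∀ Q : Measure (Measure H), IsProbabilityMeasure Q →
      Q ≪ Pr → Integrable (llr Q Pr) Q →
      Integrable (fun P => priorTransferErr l m T QL P) Q →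
      Integrable (fun P => (1 / n : ℝ) * ∑ i, gibbsExpErr l (QL (S i) P) (D i)) Q →
      transferErr l m T QL Q
        ≤ (∫ P, (1 / n : ℝ) * ∑ i, gibbsExpErr l (QL (S i) P) (D i) ∂Q)
          + (1 / lam) * ∫ P, llr Q Pr P ∂Q
          + (1 / lam) * Real.log (∫ P, Real.exp ((lam / n) *
              ∑ i, (priorTransferErr l m T QL P - gibbsExpErr l (QL (S i) P) (D i))) ∂Pr) := by
  intro Q _ hac hllr hprior hemp
  have hn' : (n : ℝ) ≠ 0 := by positivity
  have heq (P : Measure H) :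
      (lam / n) * ∑ i, (priorTransferErr l m T QL P - gibbsExpErr l (QL (S i) P) (D i))
        = lam * (priorTransferErr l m T QL P
          - (1 / n : ℝ) * ∑ i, gibbsExpErr l (QL (S i) P) (D i)) := by
    rw [Finset.sum_sub_distrib, Finset.sum_const, Finset.card_univ, Fintype.card_fin,
      nsmul_eq_mul]
    field_simp
  simp only [heq] at hmgf ⊢
  have h := integral_le_integral_llr_add_log_integral_exp hac hllr
    ((hprior.sub hemp).const_mul lam) hmgf
  simp only [Pi.sub_apply] at h
  rw [integral_const_mul, integral_sub hprior hemp, ← le_div_iff₀' hlam] at h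
  rw [transferErr, add_assoc, ← mul_add, one_div_mul_eq_div]
  linarith
end

section
/- Gaussian exponential-over-square-root bound: Let σ > 0 and a, b > 0 with 2·a·σ² < 1. Then for a real random variable x with the Gaussian distribution N(0, σ²): E[ e^{a·x²} / √(b + 2·a·x²) ] < 1 / √( b·(1 − 2·a·σ²) ). -/
open MeasureTheory ProbabilityTheory Real
open scoped ENNReal NNReal

/-- The product of the centered Gaussian density with `exp (a x²)` is an unnormalized Gaussian. -/
lemma gaussianPDFReal_zero_mul_exp_sq {σ : ℝ} (hσ : 0 < σ) (a x : ℝ) :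
    gaussianPDFReal 0 ((σ ^ 2).toNNReal) x * Real.exp (a * x ^ 2) =
      (√(2 * π * σ ^ 2))⁻¹ * Real.exp (-((1 - 2 * a * σ ^ 2) / (2 * σ ^ 2)) * x ^ 2) := by
  rw [gaussianPDFReal, Real.coe_toNNReal _ (sq_nonneg σ), mul_assoc, ← Real.exp_add]
  congr 2
  field_simp
  ring

/-- The normalized integral of `exp (a x²)` against the centered Gaussian density. -/
lemma inv_sqrt_mul_integral_exp_neg_mul_sq {σ a : ℝ} (hσ : 0 < σ) (h : 2 * a * σ ^ 2 < 1) :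
    (√(2 * π * σ ^ 2))⁻¹ * ∫ x : ℝ, Real.exp (-((1 - 2 * a * σ ^ 2) / (2 * σ ^ 2)) * x ^ 2) =
      (√(1 - 2 * a * σ ^ 2))⁻¹ := by
  have hd : 0 < 1 - 2 * a * σ ^ 2 := by linarith
  rw [integral_gaussian, ← Real.sqrt_inv, ← Real.sqrt_inv, ← Real.sqrt_mul (by positivity)]
  congr 1
  field_simp

/-- **Gaussian exponential-over-square-root bound (Lemma 9).** Let `σ > 0` and `a, b > 0`
with `2 a σ² < 1`. Then for `x ∼ N(0, σ²)`:
`E[exp (a x²) / √(b + 2 a x²)] < 1 / √(b (1 - 2 a σ²))`. -/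
theorem gaussian_exp_over_sqrt_bound
    (σ a b : ℝ) (hσ : 0 < σ) (ha : 0 < a) (hb : 0 < b)
    (h : 2 * a * σ ^ 2 < 1) :
    ∫ x, Real.exp (a * x ^ 2) / Real.sqrt (b + 2 * a * x ^ 2)
        ∂(gaussianReal 0 ((σ ^ 2).toNNReal))
      < 1 / Real.sqrt (b * (1 - 2 * a * σ ^ 2)) := by
  have hv : (σ ^ 2).toNNReal ≠ 0 := (Real.toNNReal_pos.2 (by positivity)).ne'
  have hd : 0 < 1 - 2 * a * σ ^ 2 := by linarith
  rw [integral_gaussianReal_eq_integral_smul hv]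
  simp_rw [smul_eq_mul, ← mul_div_assoc, gaussianPDFReal_zero_mul_exp_sq hσ]
  have hrhs : 1 / √(b * (1 - 2 * a * σ ^ 2)) = ∫ x : ℝ, (√(2 * π * σ ^ 2))⁻¹ *
      Real.exp (-((1 - 2 * a * σ ^ 2) / (2 * σ ^ 2)) * x ^ 2) / √b := by
    rw [integral_div, integral_const_mul, inv_sqrt_mul_integral_exp_neg_mul_sq hσ h,
      Real.sqrt_mul hb.le]
    field_simp
  rw [hrhs]
  have hg_int : Integrable fun x : ℝ ↦ (√(2 * π * σ ^ 2))⁻¹ *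
      Real.exp (-((1 - 2 * a * σ ^ 2) / (2 * σ ^ 2)) * x ^ 2) / √b :=
    ((integrable_exp_neg_mul_sq (by positivity)).const_mul _).div_const _
  have hle (x : ℝ) : (√(2 * π * σ ^ 2))⁻¹ *
      Real.exp (-((1 - 2 * a * σ ^ 2) / (2 * σ ^ 2)) * x ^ 2) / √(b + 2 * a * x ^ 2) ≤
      (√(2 * π * σ ^ 2))⁻¹ *
      Real.exp (-((1 - 2 * a * σ ^ 2) / (2 * σ ^ 2)) * x ^ 2) / √b := by
    gcongr
    exact le_add_of_nonneg_right (by positivity)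
  have hf_int := hg_int.mono' (f := fun x : ℝ ↦ (√(2 * π * σ ^ 2))⁻¹ *
      Real.exp (-((1 - 2 * a * σ ^ 2) / (2 * σ ^ 2)) * x ^ 2) / √(b + 2 * a * x ^ 2))
    (Measurable.aestronglyMeasurable (by fun_prop))
    (.of_forall fun x ↦ (Real.norm_of_nonneg (by positivity)).trans_le (hle x))
  rw [← sub_pos, ← integral_sub hg_int hf_int,
    integral_pos_iff_support_of_nonneg (fun x ↦ sub_nonneg.2 (hle x)) (hg_int.sub hf_int)]
  refine (Real.volume_Ioi (a := 0) ▸ ENNReal.zero_lt_top).trans_le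
    (measure_mono fun x (hx : 0 < x) ↦ (sub_pos.2 ?_).ne')
  refine div_lt_div_of_pos_left (by positivity) (by positivity) (Real.sqrt_lt_sqrt hb.le ?_)
  exact lt_add_of_pos_right b (by positivity)
end

section
/- Sub-gamma bound for the environment-level cumulant-generating function in Bayesian linear regression: Let d ≥ 1, μ_T ∈ ℝ^d, and σ, σ_x, σ_T, σ_P > 0. Set c = (σ_x²/σ²)·(σ_P² + σ_T²) and s² = (σ_x²/σ²)·c·‖μ_T‖² + d·c². If w* ∼ N(μ_T, σ_T²·I_d) and μ_P ∼ N(0, σ_P²·I_d) are independent, then for every λ > 0: log E[ exp( (λ/(2σ²))·( σ_x²·(‖μ_T‖² + d·σ_T² + d·σ_P²) − σ_x²·‖w* − μ_P‖² ) ) ] ≤ λ²·s² / ( 2·(1 + λ·c) ). -/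
open MeasureTheory ProbabilityTheory Real
open scoped ENNReal NNReal

/-- Multiplying a Gaussian density by `exp (-a x² / 2)` gives a multiple of another Gaussian
density (completing the square). -/
lemma gaussianPDFReal_mul_exp_neg_mul_sq (m : ℝ) {v : ℝ≥0} (hv : v ≠ 0) (a : ℝ≥0) (x : ℝ) :
    gaussianPDFReal m v x * exp (-(a / 2) * x ^ 2) =
      (√(1 + a * v))⁻¹ * exp (-(a / 2) * m ^ 2 / (1 + a * v)) *
        gaussianPDFReal (m / (1 + a * v)) (v / (1 + a * v)) x := by
  have hv' : (v : ℝ) ≠ 0 := by exact_mod_cast hv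
  have ht : (0 : ℝ) < 1 + a * v := by positivity
  have hsqrt : √(2 * π * v) = √(1 + a * v) * √(2 * π * (v / (1 + a * v))) := by
    rw [← sqrt_mul ht.le]
    congr 1
    field_simp
  simp only [gaussianPDFReal, NNReal.coe_div, NNReal.coe_add, NNReal.coe_mul, NNReal.coe_one]
  rw [hsqrt, mul_inv, mul_assoc, ← exp_add, mul_mul_mul_comm, ← exp_add]
  congr 2
  field_simp
  ring

/-- The Laplace transform of the square of a Gaussian random variable. -/
lemma integral_exp_neg_mul_sq_gaussianReal (m : ℝ) {v : ℝ≥0} (hv : v ≠ 0) (a : ℝ≥0) :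
    ∫ x, exp (-(a / 2) * x ^ 2) ∂(gaussianReal m v) =
      (√(1 + a * v))⁻¹ * exp (-(a / 2) * m ^ 2 / (1 + a * v)) := by
  have hv' : v / (1 + a * v) ≠ 0 := div_ne_zero hv (by positivity)
  simp_rw [integral_gaussianReal_eq_integral_smul hv, smul_eq_mul,
    gaussianPDFReal_mul_exp_neg_mul_sq m hv]
  rw [integral_const_mul, integral_gaussianPDFReal_eq_one _ hv', mul_one]

/-- The difference of two independent Gaussian random variables is Gaussian. -/
lemma gaussianReal_prod_map_sub (m₁ m₂ : ℝ) (v₁ v₂ : ℝ≥0) :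
    ((gaussianReal m₁ v₁).prod (gaussianReal m₂ v₂)).map (fun p => p.1 - p.2) =
      gaussianReal (m₁ - m₂) (v₁ + v₂) := by
  have h := gaussianReal_add_gaussianReal_of_indepFun
    (P := (gaussianReal m₁ v₁).prod (gaussianReal m₂ v₂)) (X := fun p => p.1)
    (Y := fun p => -p.2) (m₁ := m₁) (m₂ := -m₂) (v₁ := v₁) (v₂ := v₂)
    (indepFun_prod measurable_id measurable_neg) (by simp [Measure.map_fst_prod]) (by
      rw [← gaussianReal_map_neg]
      exact (Measure.map_map measurable_neg measurable_snd).symm.trans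
        (by simp [Measure.map_snd_prod]))
  simpa only [sub_eq_add_neg, Pi.add_def] using h

/-- The Laplace transform of the squared distance between two independent Gaussian vectors with
isotropic covariances. -/
lemma integral_exp_neg_mul_sum_sq_sub_gaussianReal {ι : Type*} [Fintype ι] (m : ι → ℝ)
    {v₁ v₂ : ℝ≥0} (hv : v₁ + v₂ ≠ 0) (a : ℝ≥0) :
    ∫ p : (ι → ℝ) × (ι → ℝ), exp (-(a / 2) * ∑ i, (p.1 i - p.2 i) ^ 2)
        ∂((Measure.pi fun i => gaussianReal (m i) v₁).prod
          (Measure.pi fun _ => gaussianReal 0 v₂)) =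
      (√(1 + a * (v₁ + v₂)))⁻¹ ^ Fintype.card ι *
        exp (-(a / 2) * (∑ i, m i ^ 2) / (1 + a * (v₁ + v₂))) := by
  rw [← (measurePreserving_arrowProdEquivProdArrow ℝ ℝ ι (fun i => gaussianReal (m i) v₁)
    (fun _ => gaussianReal 0 v₂)).integral_comp']
  have hfactor (i : ι) : ∫ q : ℝ × ℝ, exp (-(a / 2) * (q.1 - q.2) ^ 2)
      ∂((gaussianReal (m i) v₁).prod (gaussianReal 0 v₂)) =
      (√(1 + a * (v₁ + v₂)))⁻¹ * exp (-(a / 2) * m i ^ 2 / (1 + a * (v₁ + v₂))) := by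
    rw [← integral_map (φ := fun q : ℝ × ℝ => q.1 - q.2)
      (f := fun x => exp (-(a / 2) * x ^ 2)) (by fun_prop) (by fun_prop),
      gaussianReal_prod_map_sub, sub_zero, integral_exp_neg_mul_sq_gaussianReal _ hv,
      NNReal.coe_add]
  simp only [MeasurableEquiv.arrowProdEquivProdArrow, MeasurableEquiv.coe_mk,
    Equiv.arrowProdEquivProdArrow, Equiv.coe_fn_mk, Finset.mul_sum, exp_sum, Finset.sum_div]
  rw [integral_fintype_prod_eq_prod (fun (_ : ι) (q : ℝ × ℝ) => exp (-(a / 2) * (q.1 - q.2) ^ 2)),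
    Finset.prod_congr rfl fun i _ => hfactor i, Finset.prod_mul_distrib, Finset.prod_const,
    Finset.card_univ]

/-- **Sub-gamma bound for the environment-level cumulant-generating function in Bayesian
linear regression.** Let `d ≥ 1`, `μ_T ∈ ℝ^d`, `σ, σ_x, σ_T, σ_P > 0`, and set
`c = (σ_x²/σ²)(σ_P² + σ_T²)` and `s² = (σ_x²/σ²) c ‖μ_T‖² + d c²`. If
`w* ∼ N(μ_T, σ_T² I_d)` and `μ_P ∼ N(0, σ_P² I_d)` are independent, then for every `λ > 0`:
`log E[exp ((λ/(2σ²)) (σ_x² (‖μ_T‖² + d σ_T² + d σ_P²) - σ_x² ‖w* - μ_P‖²))]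
  ≤ λ² s² / (2 (1 + λ c))`. -/
theorem env_level_cgf_subgamma_linear_regression
    (d : ℕ) (hd : 1 ≤ d) (μT : Fin d → ℝ)
    (σ σx σT σP : ℝ) (hσ : 0 < σ) (hσx : 0 < σx) (hσT : 0 < σT) (hσP : 0 < σP)
    (c s2 : ℝ)
    (hc : c = (σx ^ 2 / σ ^ 2) * (σP ^ 2 + σT ^ 2))
    (hs2 : s2 = (σx ^ 2 / σ ^ 2) * c * (∑ i, (μT i) ^ 2) + d * c ^ 2)
    (lam : ℝ) (hlam : 0 < lam) :
    Real.log (∫ p : (Fin d → ℝ) × (Fin d → ℝ),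
        Real.exp ((lam / (2 * σ ^ 2)) *
          (σx ^ 2 * ((∑ i, (μT i) ^ 2) + d * σT ^ 2 + d * σP ^ 2)
            - σx ^ 2 * ∑ i, (p.1 i - p.2 i) ^ 2))
        ∂((Measure.pi fun i : Fin d => gaussianReal (μT i) ((σT ^ 2).toNNReal)).prod
            (Measure.pi fun _ : Fin d => gaussianReal 0 ((σP ^ 2).toNNReal))))
      ≤ lam ^ 2 * s2 / (2 * (1 + lam * c)) := by
  obtain ⟨a, ha⟩ : ∃ a : ℝ≥0, (a : ℝ) = lam * (σx ^ 2 / σ ^ 2) :=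
    ⟨⟨lam * (σx ^ 2 / σ ^ 2), by positivity⟩, rfl⟩
  have hT : ((σT ^ 2).toNNReal : ℝ) = σT ^ 2 := Real.coe_toNNReal _ (by positivity)
  have hP : ((σP ^ 2).toNNReal : ℝ) = σP ^ 2 := Real.coe_toNNReal _ (by positivity)
  have hv : (σT ^ 2).toNNReal + (σP ^ 2).toNNReal ≠ 0 := by
    rw [← NNReal.coe_ne_zero, NNReal.coe_add, hT, hP]
    positivity
  have hac : (a : ℝ) * (σT ^ 2 + σP ^ 2) = lam * c := by
    rw [ha, hc]
    ring
  have hc0 : 0 < c := by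
    rw [hc]
    positivity
  have ht : 0 < 1 + lam * c := by positivity
  have hexp (p : (Fin d → ℝ) × (Fin d → ℝ)) :
      Real.exp ((lam / (2 * σ ^ 2)) *
          (σx ^ 2 * ((∑ i, (μT i) ^ 2) + d * σT ^ 2 + d * σP ^ 2)
            - σx ^ 2 * ∑ i, (p.1 i - p.2 i) ^ 2)) =
        Real.exp ((a / 2) * (∑ i, (μT i) ^ 2) + d / 2 * (lam * c)) *
          Real.exp (-(a / 2) * ∑ i, (p.1 i - p.2 i) ^ 2) := by
    rw [← Real.exp_add, ← hac, ha]
    congr 1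
    field_simp
    ring
  simp_rw [hexp]
  rw [integral_const_mul, integral_exp_neg_mul_sum_sq_sub_gaussianReal μT hv, hT, hP, hac,
    Real.log_mul (by positivity) (by positivity), Real.log_mul (by positivity) (by positivity),
    Real.log_exp, Real.log_exp, Real.log_pow, Real.log_inv, Real.log_sqrt ht.le, Fintype.card_fin]
  have hs : lam ^ 2 * s2 = a * (lam * c) * (∑ i, (μT i) ^ 2) + d * (lam * c) ^ 2 := by
    rw [hs2, ha]
    ring
  have hlog := mul_le_mul_of_nonneg_left (Real.one_sub_inv_le_log_of_pos ht)
    (by positivity : (0 : ℝ) ≤ d / 2)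
  rw [hs]
  calc _ = a * (∑ i, (μT i) ^ 2) * (lam * c) / (2 * (1 + lam * c)) + d / 2 * (lam * c)
        - d / 2 * Real.log (1 + lam * c) := by
        field_simp
        ring
    _ ≤ a * (∑ i, (μT i) ^ 2) * (lam * c) / (2 * (1 + lam * c)) + d / 2 * (lam * c)
        - d / 2 * (1 - (1 + lam * c)⁻¹) := by
        linarith
    _ = _ := by
        field_simp
        ring
end
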